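/- There exists an absolute constant C > 0 such that for all integers k and t with 1 ≤ t < (3/4)k − 4, and all integers n ≥ C · k^3, every t-intersecting family F ⊆ binom([n],k) satisfies |I(F)| ≤ |I(A_t)|, where A_t = {A ∈ binom([n],k) : |A ∩ {1,…,t+2}| ≥ t+1}. -/

import Mathlib

open Finset

/-- The collection of distinct intersections `{F ∩ G : F, G ∈ 𝓕, F ≠ G}`. -/
def interFam (F : Finset (Finset ℕ)) : Finset (Finset ℕ) :=
  ((F ×ˢ F).filter fun p => p.1 ≠ p.2).image fun p => p.1 ∩ p.2

/-- A family is `t`-intersecting if any two members meet in at least `t` elements. -/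
def tIntersecting (t : ℕ) (F : Finset (Finset ℕ)) : Prop :=
  ∀ A ∈ F, ∀ B ∈ F, t ≤ (A ∩ B).card

/-- The family `𝓐_t = {A ∈ [n]^(k) : |A ∩ {1,…,t+2}| ≥ t+1}`. -/
def At (n k t : ℕ) : Finset (Finset ℕ) :=
  ((Finset.Icc 1 n).powersetCard k).filter fun A => t + 1 ≤ (A ∩ Finset.Icc 1 (t + 2)).card

/-- A `t`-intersecting family `F ⊆ [n]^(k)` is saturated if no `k`-set outside `F`
can be added keeping the `t`-intersecting property. -/
def saturated (n k t : ℕ) (F : Finset (Finset ℕ)) : Prop :=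
  ∀ G ∈ (Finset.Icc 1 n).powersetCard k, G ∉ F → ¬ tIntersecting t (insert G F)

/-- The family of `t`-transversals `T(F)`. -/
def transv (n k t : ℕ) (F : Finset (Finset ℕ)) : Finset (Finset ℕ) :=
  (Finset.Icc 1 n).powerset.filter fun T => T.card ≤ k ∧ ∀ A ∈ F, t ≤ (T ∩ A).card

/-- The minimal members (under inclusion) of a family. -/
def minFam (S : Finset (Finset ℕ)) : Finset (Finset ℕ) :=
  S.filter fun B => ∀ B' ∈ S, B' ⊆ B → B' = B

/-!
Replace `F` by a saturated family; this only enlarges `interFam F`. If `n` is large, a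
`t`-transversal of a saturated family with at most `k` elements can be completed to a member by
points outside any other such transversal, so these transversals pairwise meet in at least `t`
elements. Those of size at most `t + 1` either share a `t`-set `T`, or contain two sets whose union
`Y` has size `t + 2` and meets every member of `F` in at least `t + 1` elements. In the latter case
a permutation of `[n]` carrying `Y` to `[t + 2]` embeds `F` into `At n k t`.

In the former case, `A ∩ B` either contains `T`, which leaves at most `∑_{i < k - t} (n choose i)`
possibilities, or `A` or `B` contains a minimal transversal of size `t + r` with `r ≥ 2`. A
branching argument bounds the number of these by `(8 k) ^ r`. Each of them accounts for at most
`(t + r + 1) ^ r` times `∑_{i ≤ k - t - r} (n choose i)` intersections, and every decrease of the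
upper summation limit gains a factor of order `n / k`. As `n` is at least of order `k ^ 3`, the
total is at most `1 + t² / 4` times `∑_{i < k - t} (n choose i)`. On the other hand,
`interFam (At n k t)` contains every `(k - 1)`-set meeting `[t + 2]` in exactly `t` elements, and
there are at least `(t + 1) (t + 2) / 4` times the same sum of those.
-/

section ChooseSum

/-- The number `∑_{i ≤ j} (n choose i)` of subsets of size at most `j` of an `n`-element set; the
unit in which all families of intersections are measured. -/
def chooseSum (n j : ℕ) : ℕ := ∑ i ∈ range (j + 1), n.choose i

lemma chooseSum_zero (n : ℕ) : chooseSum n 0 = 1 := by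
  simp [chooseSum]

lemma chooseSum_succ (n j : ℕ) : chooseSum n (j + 1) = chooseSum n j + n.choose (j + 1) :=
  sum_range_succ _ _

lemma card_filter_card_le {α : Type*} (U : Finset α) (j : ℕ) :
    #{X ∈ U.powerset | #X ≤ j} = chooseSum #U j := by
  have hdisj : ((range (j + 1) : Finset ℕ) : Set ℕ).PairwiseDisjoint fun i => U.powersetCard i :=
    U.pairwise_disjoint_powersetCard.set_pairwise _
  have hunion : {X ∈ U.powerset | #X ≤ j} = (range (j + 1)).disjiUnion _ hdisj := by
    ext X
    simp [mem_powersetCard, and_comm]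
  rw [hunion, card_disjiUnion]
  simp only [card_powersetCard, chooseSum]

lemma chooseSum_le_succ_pow (n j : ℕ) : chooseSum n j ≤ (n + 1) ^ j := by
  induction j with
  | zero => simp [chooseSum]
  | succ j ih =>
    have h : n.choose (j + 1) ≤ n * (n + 1) ^ j := by
      refine (Nat.choose_le_pow n (j + 1)).trans ?_
      rw [pow_succ']
      gcongr
      exact n.le_succ
    rw [chooseSum_succ, pow_succ]
    linarith

lemma mul_choose_le_choose_succ {c n i : ℕ} (h : (c + 1) * (i + 1) ≤ n + 1) :
    c * n.choose i ≤ n.choose (i + 1) := by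
  have hc : c * (i + 1) ≤ n - i := by
    rw [add_one_mul] at h
    omega
  refine Nat.le_of_mul_le_mul_right (c := i + 1) ?_ i.succ_pos
  calc c * n.choose i * (i + 1) = n.choose i * (c * (i + 1)) := by ring
    _ ≤ n.choose i * (n - i) := by gcongr
    _ = n.choose (i + 1) * (i + 1) := (Nat.choose_succ_right_eq n i).symm

lemma mul_chooseSum_le_chooseSum_succ {c n j : ℕ} (h : (c + 1) * (j + 1) ≤ n + 1) :
    c * chooseSum n j ≤ chooseSum n (j + 1) := by
  rw [chooseSum, mul_sum, chooseSum, sum_range_succ' _ (j + 1)]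
  refine (sum_le_sum fun i hi => ?_).trans (Nat.le_add_right _ _)
  rw [mem_range] at hi
  exact mul_choose_le_choose_succ ((Nat.mul_le_mul_left _ hi).trans h)

lemma pow_mul_chooseSum_le_chooseSum_add {c n j d : ℕ} (h : (c + 1) * (j + d) ≤ n + 1) :
    c ^ d * chooseSum n j ≤ chooseSum n (j + d) := by
  induction d with
  | zero => simp
  | succ d ih =>
    have hd : (c + 1) * (j + d) ≤ n + 1 := (Nat.mul_le_mul_left _ (by omega)).trans h
    calc c ^ (d + 1) * chooseSum n j = c * (c ^ d * chooseSum n j) := by ring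
      _ ≤ c * chooseSum n (j + d) := by gcongr; exact ih hd
      _ ≤ chooseSum n (j + (d + 1)) := mul_chooseSum_le_chooseSum_succ h

lemma choose_add_succ_le (n m j : ℕ) :
    (n + m).choose (j + 1) ≤ n.choose (j + 1) + m * (n + m).choose j := by
  induction m with
  | zero => simp
  | succ m ih =>
    have hmono : (n + m).choose j ≤ (n + (m + 1)).choose j := Nat.choose_le_choose j (by omega)
    calc (n + (m + 1)).choose (j + 1) = (n + m).choose j + (n + m).choose (j + 1) := by
          rw [← add_assoc, Nat.choose_succ_succ]
      _ ≤ (n + m).choose j + (n.choose (j + 1) + m * (n + m).choose j) := by gcongr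
      _ = n.choose (j + 1) + (m + 1) * (n + m).choose j := by ring
      _ ≤ n.choose (j + 1) + (m + 1) * (n + (m + 1)).choose j := by gcongr

lemma chooseSum_le_two_mul_choose_sub {n m j : ℕ} (h : (2 * m + 3) * j ≤ n + 1) :
    chooseSum n j ≤ 2 * (n - m).choose j := by
  rcases j with - | j
  · simp [chooseSum]
  have hm : m ≤ n := by nlinarith
  have hsub := choose_add_succ_le (n - m) m j
  rw [Nat.sub_add_cancel hm] at hsub
  have htop : n.choose j ≤ chooseSum n j :=
    single_le_sum (f := n.choose) (fun _ _ => Nat.zero_le _) (self_mem_range_succ j)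
  have hstep : 2 * (m + 1) * chooseSum n j ≤ chooseSum n (j + 1) :=
    mul_chooseSum_le_chooseSum_succ (by linarith)
  rw [chooseSum_succ] at hstep ⊢
  nlinarith

end ChooseSum

section NearFam

variable {α : Type*} [DecidableEq α]

/-- The subsets of `U` that miss at most `a` elements of `X` and have at most `b` elements outside
`X`. Every intersection of two members of a family falls into such a class, with `X` a small
transversal. -/
def nearFam (U X : Finset α) (a b : ℕ) : Finset (Finset α) :=
  {I ∈ U.powerset | #(X \ I) ≤ a ∧ #(I \ X) ≤ b}

lemma mem_nearFam {U X I : Finset α} {a b : ℕ} :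
    I ∈ nearFam U X a b ↔ I ⊆ U ∧ #(X \ I) ≤ a ∧ #(I \ X) ≤ b := by
  rw [nearFam, mem_filter, mem_powerset]

lemma card_nearFam_le (U X : Finset α) (a b : ℕ) :
    #(nearFam U X a b) ≤ chooseSum #X a * chooseSum #U b := by
  rw [← card_filter_card_le, ← card_filter_card_le, ← card_product]
  refine card_le_card_of_injOn (fun I => (X \ I, I \ X)) (fun I hI => ?_) fun I _ J _ hIJ => ?_
  · obtain ⟨hIU, ha, hb⟩ := mem_nearFam.1 hI
    simp only [coe_product, coe_filter, mem_powerset, Set.mem_prod, Set.mem_ofPred_eq]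
    exact ⟨⟨sdiff_subset, ha⟩, sdiff_subset.trans hIU, hb⟩
  · simp only [Prod.mk.injEq, Finset.ext_iff, mem_sdiff] at hIJ
    ext x
    have := hIJ.1 x
    have := hIJ.2 x
    tauto

end NearFam

section Transversal

variable {α : Type*} [DecidableEq α] {t : ℕ} {F B U : Finset (Finset α)}

/-- `T` is a `t`-transversal of `F`: it meets every member in at least `t` elements. Unlike in
`transv`, the ground set and the size of `T` are not restricted. -/
def IsTransversal (t : ℕ) (F : Finset (Finset α)) (T : Finset α) : Prop :=
  ∀ A ∈ F, t ≤ #(T ∩ A)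

lemma IsTransversal.mono {S T : Finset α} (hS : IsTransversal t F S) (hST : S ⊆ T) :
    IsTransversal t F T :=
  fun A hA => (hS A hA).trans (card_le_card (inter_subset_inter_right hST))

lemma exists_forall_isTransversal_inter_sdiff_nonempty {P : Finset α}
    (hP : ¬ IsTransversal t F P) :
    ∃ A ∈ F, ∀ X, IsTransversal t F X → (X ∩ (A \ P)).Nonempty := by
  simp only [IsTransversal, not_forall, not_le] at hP
  obtain ⟨A, hA, hPA⟩ := hP
  refine ⟨A, hA, fun X hX => ?_⟩
  by_contra hne
  rw [not_nonempty_iff_eq_empty, ← inter_sdiff_assoc, sdiff_eq_empty_iff_subset] at hne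
  exact hPA.not_ge ((hX A hA).trans (card_le_card (subset_inter hne inter_subset_right)))

lemma card_filter_superset_le_pow_mul {m M a b d : ℕ}
    (hstep : ∀ P, a ≤ #P → #P < b → ∀ X ∈ B, P ⊆ X →
      ∃ G, Disjoint G P ∧ #G ≤ m ∧ ∀ Y ∈ B, P ⊆ Y → (Y ∩ G).Nonempty)
    (hM : ∀ P, #P = b → #{X ∈ B | P ⊆ X} ≤ M) {P : Finset α} (ha : a ≤ #P) (hd : #P + d = b) :
    #{X ∈ B | P ⊆ X} ≤ m ^ d * M := by
  induction d generalizing P with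
  | zero => simpa using hM P hd
  | succ d ih =>
    rcases {X ∈ B | P ⊆ X}.eq_empty_or_nonempty with hempty | ⟨X, hX⟩
    · simp [hempty]
    rw [mem_filter] at hX
    obtain ⟨G, hGP, hGm, hG⟩ := hstep P ha (by omega) X hX.1 hX.2
    have hcover : {Y ∈ B | P ⊆ Y} ⊆ G.biUnion fun x => {Y ∈ B | insert x P ⊆ Y} := by
      intro Y hY
      rw [mem_filter] at hY
      obtain ⟨x, hx⟩ := hG Y hY.1 hY.2
      rw [mem_inter] at hx
      exact mem_biUnion.2 ⟨x, hx.2, mem_filter.2 ⟨hY.1, insert_subset hx.1 hY.2⟩⟩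
    have hbranch : ∀ x ∈ G, #{Y ∈ B | insert x P ⊆ Y} ≤ m ^ d * M := by
      intro x hx
      have hcard : #(insert x P) = #P + 1 :=
        card_insert_of_notMem (Finset.disjoint_left.1 hGP hx)
      exact ih (by omega) (by omega)
    calc #{Y ∈ B | P ⊆ Y} ≤ #G * (m ^ d * M) :=
          (card_le_card hcover).trans (card_biUnion_le_card_mul _ _ _ hbranch)
      _ ≤ m * (m ^ d * M) := by gcongr
      _ = m ^ (d + 1) * M := by ring

lemma card_filter_superset_le_pow_of_minimal {k s d : ℕ} (hF : ∀ A ∈ F, #A ≤ k)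
    (hB : ∀ X ∈ B, Minimal (IsTransversal t F) X) (hBs : ∀ X ∈ B, #X = s)
    {P : Finset α} (hP : #P + d = s) : #{X ∈ B | P ⊆ X} ≤ k ^ d := by
  suffices h : #{X ∈ B | P ⊆ X} ≤ k ^ d * 1 by rwa [mul_one] at h
  refine card_filter_superset_le_pow_mul (a := 0) (fun Q _ hQ X hX hQX => ?_) (fun Q hQ => ?_)
    (Nat.zero_le _) hP
  · have hQX' : Q ⊂ X := hQX.ssubset_of_ne fun h => hQ.ne (h ▸ hBs X hX)
    obtain ⟨A, hA, hAQ⟩ :=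
      exists_forall_isTransversal_inter_sdiff_nonempty ((hB X hX).not_prop_of_lt hQX')
    exact ⟨A \ Q, sdiff_disjoint, (card_le_card sdiff_subset).trans (hF A hA),
      fun Y hY _ => hAQ Y (hB Y hY).prop⟩
  · have heq : ∀ X ∈ {X ∈ B | Q ⊆ X}, Q = X := fun X hX =>
      eq_of_subset_of_card_le (mem_filter.1 hX).2 (hQ ▸ (hBs X (mem_filter.1 hX).1).le)
    exact card_le_one.2 fun X hX Y hY => (heq X hX).symm.trans (heq Y hY)

lemma card_filter_superset_le_of_forall_not_isTransversal {r q M : ℕ}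
    (hB : ∀ X ∈ B, IsTransversal t B X) (hBr : ∀ X ∈ B, #X = t + r)
    (hq : ∀ Q, #Q < t + q → ¬ IsTransversal t B Q)
    (hM : ∀ Q, #Q = t + q → #{X ∈ B | Q ⊆ X} ≤ M) {P : Finset α} (hP : #P = t) :
    #{X ∈ B | P ⊆ X} ≤ (2 * r) ^ q * M := by
  refine card_filter_superset_le_pow_mul (fun Q hQt hQ X hX hQX => ?_) hM hP.ge (by omega)
  obtain ⟨A, hA, hAQ⟩ := exists_forall_isTransversal_inter_sdiff_nonempty (hq Q hQ)
  refine ⟨A \ Q, sdiff_disjoint, ?_, fun Y hY _ => hAQ Y (hB Y hY)⟩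
  have hsplit : A \ Q ⊆ (A \ X) ∪ (X \ Q) := by
    intro x
    simp only [mem_union, mem_sdiff]
    tauto
  have hsplit_card := (card_le_card hsplit).trans (card_union_le _ _)
  have hAX := card_sdiff_add_card_inter A X
  have hXQ := card_sdiff_of_subset hQX
  have hinter := hB A hA X hX
  have hA_card := hBr A hA
  have hX_card := hBr X hX
  omega

lemma choose_mul_factorial_le_pow (t q : ℕ) : (t + q).choose t * q.factorial ≤ (t + q) ^ q := by
  rw [Nat.choose_symm_add, mul_comm, ← Nat.descFactorial_eq_factorial_mul_choose]
  exact Nat.descFactorial_le_pow _ _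

lemma pow_le_factorial_mul_four_pow {q r : ℕ} (hq : q ≤ r) : r ^ q ≤ q.factorial * 4 ^ r := by
  calc r ^ q ≤ (r + 1) ^ q := Nat.pow_le_pow_left r.le_succ q
    _ ≤ (r + 1).ascFactorial q := Nat.pow_succ_le_ascFactorial (r + 1) q
    _ = q.factorial * (r + q).choose q := Nat.ascFactorial_eq_factorial_mul_choose r q
    _ ≤ q.factorial * 2 ^ (2 * r) := by
        gcongr
        exact (Nat.choose_le_two_pow _ _).trans (Nat.pow_le_pow_right two_pos (by omega))
    _ = q.factorial * 4 ^ r := by rw [pow_mul]; norm_num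

lemma choose_mul_two_mul_pow_mul_pow_le {t q r k : ℕ} (hq : q ≤ r) (hk : t + q ≤ k) :
    (t + q).choose t * ((2 * r) ^ q * k ^ (r - q)) ≤ (8 * k) ^ r := by
  calc (t + q).choose t * ((2 * r) ^ q * k ^ (r - q))
      = (t + q).choose t * (2 ^ q * r ^ q * k ^ (r - q)) := by rw [mul_pow]
    _ ≤ (t + q).choose t * (2 ^ r * (q.factorial * 4 ^ r) * k ^ (r - q)) := by
        gcongr
        · norm_num
        · exact pow_le_factorial_mul_four_pow hq
    _ = (t + q).choose t * q.factorial * (2 ^ r * 4 ^ r) * k ^ (r - q) := by ring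
    _ ≤ k ^ q * (2 ^ r * 4 ^ r) * k ^ (r - q) := by
        gcongr
        exact (choose_mul_factorial_le_pow t q).trans (Nat.pow_le_pow_left hk q)
    _ = (2 * 4) ^ r * k ^ (q + (r - q)) := by rw [mul_pow 2 4, pow_add]; ring
    _ = (8 * k) ^ r := by rw [Nat.add_sub_cancel' hq, mul_pow 8 k]

/- Let `t + q` be the least size of a `t`-transversal `S` of `B`. Every member of `B` contains a
`t`-subset of `S`; branching over `B` extends it to size `t + q` with at most `2 r` choices per
step, and branching over `F` extends it further to size `t + r` with at most `k` per step. -/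
theorem card_le_of_forall_minimal_isTransversal {r k : ℕ} (hk : t + r ≤ k) (hF : ∀ A ∈ F, #A ≤ k)
    (hB : ∀ X ∈ B, Minimal (IsTransversal t F) X) (hBr : ∀ X ∈ B, #X = t + r)
    (hBB : ∀ X ∈ B, IsTransversal t B X) : #B ≤ (8 * k) ^ r := by
  rcases B.eq_empty_or_nonempty with rfl | ⟨X₀, hX₀⟩
  · simp
  obtain ⟨S, hS, hSmin⟩ :=
    exists_minimalFor_of_wellFoundedLT (IsTransversal t B) card ⟨X₀, hBB X₀ hX₀⟩
  have hSt : t ≤ #S := (hS X₀ hX₀).trans (card_le_card inter_subset_left)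
  have hSr : #S ≤ t + r := by
    by_contra! h
    exact h.not_ge (hBr X₀ hX₀ ▸ hSmin (hBB X₀ hX₀) (by rw [hBr X₀ hX₀]; exact h.le))
  obtain ⟨q, hq⟩ := Nat.exists_eq_add_of_le hSt
  have hqr : q ≤ r := by omega
  have hsmall : ∀ Q, #Q < t + q → ¬ IsTransversal t B Q := fun Q hQ hQB => by
    have := hSmin hQB (by omega)
    omega
  have hfiber : ∀ P ∈ S.powersetCard t, #{X ∈ B | P ⊆ X} ≤ (2 * r) ^ q * k ^ (r - q) :=
    fun P hP => card_filter_superset_le_of_forall_not_isTransversal hBB hBr hsmall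
      (fun Q hQ => card_filter_superset_le_pow_of_minimal hF hB hBr (by omega))
      (mem_powersetCard.1 hP).2
  have hcover : B ⊆ (S.powersetCard t).biUnion fun P => {X ∈ B | P ⊆ X} := by
    intro X hX
    obtain ⟨P, hP, hPt⟩ := exists_subset_card_eq (hS X hX)
    rw [subset_inter_iff] at hP
    exact mem_biUnion.2 ⟨P, mem_powersetCard.2 ⟨hP.1, hPt⟩, mem_filter.2 ⟨hX, hP.2⟩⟩
  calc #B ≤ #(S.powersetCard t) * ((2 * r) ^ q * k ^ (r - q)) :=
        (card_le_card hcover).trans (card_biUnion_le_card_mul _ _ _ hfiber)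
    _ = (t + q).choose t * ((2 * r) ^ q * k ^ (r - q)) := by rw [card_powersetCard, hq]
    _ ≤ (8 * k) ^ r := choose_mul_two_mul_pow_mul_pow_le hqr (by omega)

lemma succ_le_card_inter_of_card_inter_lt {X₁ X₂ X₃ Y A : Finset α}
    (h₁ : X₁ ⊆ Y) (h₂ : X₂ ⊆ Y) (h₃ : X₃ ⊆ Y) (hlt : #(X₁ ∩ X₂ ∩ X₃) < t)
    (hA₁ : t ≤ #(A ∩ X₁)) (hA₂ : t ≤ #(A ∩ X₂)) (hA₃ : t ≤ #(A ∩ X₃)) : t + 1 ≤ #(A ∩ Y) := by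
  by_contra! hAY
  have hsub : ∀ X ⊆ Y, t ≤ #(A ∩ X) → A ∩ Y ⊆ X := by
    intro X hXY hAX
    have heq : A ∩ X = A ∩ Y :=
      eq_of_subset_of_card_le (inter_subset_inter_left hXY) (by omega)
    exact heq ▸ inter_subset_right
  have hinter : A ∩ Y ⊆ X₁ ∩ X₂ ∩ X₃ :=
    subset_inter (subset_inter (hsub X₁ h₁ hA₁) (hsub X₂ h₂ hA₂)) (hsub X₃ h₃ hA₃)
  have := card_le_card hinter
  have := hA₁.trans (card_le_card (inter_subset_inter_left h₁))
  omega

lemma subset_union_of_card_inter_lt {X₁ X₂ X₃ : Finset α} (h₃ : #X₃ ≤ t + 1)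
    (h₁₃ : t ≤ #(X₁ ∩ X₃)) (h₂₃ : t ≤ #(X₂ ∩ X₃)) (hlt : #(X₁ ∩ X₂ ∩ X₃) < t) :
    X₃ ⊆ X₁ ∪ X₂ := by
  have hcount := card_union_add_card_inter (X₁ ∩ X₃) (X₂ ∩ X₃)
  rw [← union_inter_distrib_right, ← inter_inter_distrib_right] at hcount
  exact inter_eq_right.1 (eq_of_subset_of_card_le inter_subset_right (by omega))

theorem exists_common_subset_or_exists_card_union_eq [Infinite α]
    (hU : ∀ X ∈ U, #X ≤ t + 1) (hUU : ∀ X ∈ U, IsTransversal t U X) :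
    (∃ T, #T = t ∧ ∀ X ∈ U, T ⊆ X) ∨
      ∃ X₁ ∈ U, ∃ X₂ ∈ U, #(X₁ ∪ X₂) = t + 2 ∧
        ∀ A, IsTransversal t U A → t + 1 ≤ #(A ∩ (X₁ ∪ X₂)) := by
  refine or_iff_not_imp_left.2 fun hT => ?_
  push Not at hT
  obtain ⟨T₀, hT₀⟩ := Infinite.exists_subset_card_eq α t
  obtain ⟨X₁, hX₁, -⟩ := hT T₀ hT₀
  obtain ⟨T₁, hT₁, hT₁t⟩ :=
    exists_subset_card_eq ((hUU X₁ hX₁ X₁ hX₁).trans (card_le_card inter_subset_left))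
  obtain ⟨X₂, hX₂, hT₁X₂⟩ := hT T₁ hT₁t
  have h₁₂ : #(X₁ ∩ X₂) = t := by
    refine le_antisymm ?_ (hUU X₁ hX₁ X₂ hX₂)
    by_contra! hlt
    have hsub : X₁ ∩ X₂ = X₁ :=
      eq_of_subset_of_card_le inter_subset_left ((hU X₁ hX₁).trans hlt)
    exact hT₁X₂ (hT₁.trans (inter_eq_left.1 hsub))
  obtain ⟨X₃, hX₃, hnot⟩ := hT _ h₁₂
  have hlt : #(X₁ ∩ X₂ ∩ X₃) < t :=
    h₁₂ ▸ card_lt_card (inter_subset_left.ssubset_of_ne fun h => hnot (inter_eq_left.1 h))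
  have hcard : ∀ X ∈ U, X₁ ∩ X₂ ⊆ X → #X = t + 1 := by
    intro X hX hsub
    refine le_antisymm (hU X hX) ?_
    by_contra! hXt
    have heq : X ∩ X₃ = X :=
      eq_of_subset_of_card_le inter_subset_left (by have := hUU X hX X₃ hX₃; omega)
    exact hnot (hsub.trans (inter_eq_left.1 heq))
  have h₃ : X₃ ⊆ X₁ ∪ X₂ :=
    subset_union_of_card_inter_lt (hU X₃ hX₃) (hUU X₁ hX₁ X₃ hX₃) (hUU X₂ hX₂ X₃ hX₃) hlt
  refine ⟨X₁, hX₁, X₂, hX₂, ?_, fun A hA => ?_⟩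
  · rw [card_union, hcard X₁ hX₁ inter_subset_left, hcard X₂ hX₂ inter_subset_right]
    omega
  · exact succ_le_card_inter_of_card_inter_lt subset_union_left subset_union_right h₃ hlt
      (hA X₁ hX₁) (hA X₂ hX₂) (hA X₃ hX₃)

end Transversal

section InterFam

variable {F G : Finset (Finset ℕ)} {I : Finset ℕ}

lemma mem_interFam : I ∈ interFam F ↔ ∃ A ∈ F, ∃ B ∈ F, A ≠ B ∧ A ∩ B = I := by
  simp only [interFam, mem_image, mem_filter, mem_product, Prod.exists]
  tauto

lemma interFam_mono (h : F ⊆ G) : interFam F ⊆ interFam G := by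
  intro I hI
  obtain ⟨A, hA, B, hB, hne, rfl⟩ := mem_interFam.1 hI
  exact mem_interFam.2 ⟨A, h hA, B, h hB, hne, rfl⟩

lemma card_interFam_le_of_map_mem (f : ℕ ↪ ℕ) (h : ∀ A ∈ F, A.map f ∈ G) :
    #(interFam F) ≤ #(interFam G) := by
  refine card_le_card_of_injOn (Finset.map f) (fun I hI => ?_) (map_injective f).injOn
  obtain ⟨A, hA, B, hB, hne, rfl⟩ := mem_interFam.1 hI
  exact mem_interFam.2
    ⟨_, h A hA, _, h B hB, (map_injective f).ne hne, (map_inter _ _).symm⟩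

lemma card_lt_of_mem_interFam {k : ℕ} (hF : ∀ A ∈ F, #A = k) (hI : I ∈ interFam F) :
    #I < k := by
  obtain ⟨A, hA, B, hB, hne, rfl⟩ := mem_interFam.1 hI
  by_contra! h
  have hAB : A ⊆ B := inter_eq_left.1 (eq_of_subset_of_card_le inter_subset_left (hF A hA ▸ h))
  exact hne (eq_of_subset_of_card_le hAB (hF A hA ▸ hF B hB).le)

lemma interFam_eq_empty_of_le {k t : ℕ} (hkt : k ≤ t) (hF : ∀ A ∈ F, #A = k)
    (hFt : tIntersecting t F) : interFam F = ∅ := by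
  refine eq_empty_of_forall_notMem fun I hI => ?_
  have hlt := card_lt_of_mem_interFam hF hI
  obtain ⟨A, hA, B, hB, -, rfl⟩ := mem_interFam.1 hI
  exact (hkt.trans (hFt A hA B hB)).not_gt hlt

end InterFam

section SmallSupport

variable {n k t : ℕ} {F : Finset (Finset ℕ)}

lemma exists_perm_map_eq {α : Type*} {S Y Z : Finset α} (hY : Y ⊆ S) (hZ : Z ⊆ S)
    (hYZ : #Y = #Z) :
    ∃ f : Equiv.Perm α, S.map f.toEmbedding = S ∧ Y.map f.toEmbedding = Z := by
  classical
  have hcard : #(Y.subtype (· ∈ S)) = #(Z.subtype (· ∈ S)) := by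
    rwa [card_subtype, card_subtype, filter_mem_eq_inter, filter_mem_eq_inter,
      inter_eq_left.2 hY, inter_eq_left.2 hZ]
  let e := equivOfCardEq hcard
  let f : Equiv.Perm α := e.extendSubtype.ofSubtype
  have hfS : ∀ x ∈ S, f x ∈ S := fun x hx => by
    simp only [f, Equiv.Perm.ofSubtype_apply_of_mem _ hx, coe_mem]
  have hfY : ∀ x ∈ Y, f x ∈ Z := fun x hx => by
    simp only [f, Equiv.Perm.ofSubtype_apply_of_mem _ (hY hx)]
    exact mem_subtype.1 (e.extendSubtype_mem ⟨x, hY hx⟩ (mem_subtype.2 hx))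
  refine ⟨f, eq_of_subset_of_card_le ?_ (card_map _).ge,
    eq_of_subset_of_card_le ?_ (hYZ.symm.trans (card_map _).symm).le⟩
  · exact map_subset_iff_subset_preimage.2 fun x hx => mem_preimage.2 (hfS x hx)
  · exact map_subset_iff_subset_preimage.2 fun x hx => mem_preimage.2 (hfY x hx)

lemma mem_At {A : Finset ℕ} :
    A ∈ At n k t ↔ A ⊆ Icc 1 n ∧ #A = k ∧ t + 1 ≤ #(A ∩ Icc 1 (t + 2)) := by
  rw [At, mem_filter, mem_powersetCard, and_assoc]

lemma card_interFam_le_card_interFam_At {Y : Finset ℕ} (hF : F ⊆ (Icc 1 n).powersetCard k)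
    (hY : Y ⊆ Icc 1 n) (hYt : #Y = t + 2) (hFY : ∀ A ∈ F, t + 1 ≤ #(A ∩ Y)) :
    #(interFam F) ≤ #(interFam (At n k t)) := by
  have htn : t + 2 ≤ n := by simpa [hYt] using card_le_card hY
  obtain ⟨f, hfn, hfY⟩ := exists_perm_map_eq hY (Icc_subset_Icc_right htn)
    (by rw [hYt, Nat.card_Icc, Nat.add_sub_cancel])
  refine card_interFam_le_of_map_mem f.toEmbedding fun A hA => mem_At.2 ?_
  obtain ⟨hAn, hAk⟩ := mem_powersetCard.1 (hF hA)
  rw [card_map, ← hfY, ← map_inter, card_map]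
  exact ⟨hfn ▸ map_subset_map.2 hAn, hAk, hFY A hA⟩

lemma mem_interFam_At {I : Finset ℕ} (htn : t + 2 ≤ n) (hI : I ⊆ Icc 1 n) (hIk : #I + 1 = k)
    (hIt : #(I ∩ Icc 1 (t + 2)) = t) : I ∈ interFam (At n k t) := by
  have hmem : ∀ x ∈ Icc 1 (t + 2) \ I, insert x I ∈ At n k t := by
    intro x hx
    rw [mem_sdiff] at hx
    refine mem_At.2 ⟨insert_subset (Icc_subset_Icc_right htn hx.1) hI, ?_, ?_⟩
    · rw [card_insert_of_notMem hx.2, hIk]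
    · rw [insert_inter_of_mem hx.1, card_insert_of_notMem fun h => hx.2 (mem_of_mem_inter_left h),
        hIt]
  have htwo : 1 < #(Icc 1 (t + 2) \ I) := by
    have := card_sdiff_add_card_inter (Icc 1 (t + 2)) I
    rw [inter_comm, hIt, Nat.card_Icc] at this
    omega
  obtain ⟨a, ha, b, hb, hab⟩ := one_lt_card.1 htwo
  have haI : a ∉ insert b I := by simp [hab, (mem_sdiff.1 ha).2]
  refine mem_interFam.2 ⟨_, hmem a ha, _, hmem b hb, fun h => haI (h ▸ mem_insert_self a I), ?_⟩
  rw [insert_inter_of_notMem haI, inter_eq_left.2 (subset_insert b I)]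

lemma choose_mul_choose_le_card_interFam_At (htk : t + 1 ≤ k) (htn : t + 2 ≤ n) :
    (t + 2).choose t * (n - (t + 2)).choose (k - t - 1) ≤ #(interFam (At n k t)) := by
  let M := Icc 1 (t + 2)
  let N := Icc 1 n \ M
  have hMN : Disjoint M N := disjoint_sdiff
  have hM : #M = t + 2 := by rw [Nat.card_Icc, Nat.add_sub_cancel]
  have hN : #N = n - (t + 2) := by
    rw [card_sdiff_of_subset (Icc_subset_Icc_right htn), hM, Nat.card_Icc, Nat.add_sub_cancel]
  rw [← hN, ← hM, ← card_powersetCard, ← card_powersetCard, ← card_product]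
  refine card_le_card_of_surjOn (fun I => (I ∩ M, I ∩ N)) ?_
  rintro ⟨V, W⟩ hVW
  obtain ⟨hV, hW⟩ := mem_product.1 (mem_coe.1 hVW)
  obtain ⟨hVM, hVt⟩ := mem_powersetCard.1 hV
  obtain ⟨hWN, hWk⟩ := mem_powersetCard.1 hW
  have hIM : (V ∪ W) ∩ M = V := by
    rw [union_inter_distrib_right, inter_eq_left.2 hVM,
      disjoint_iff_inter_eq_empty.1 (hMN.symm.mono_left hWN), union_empty]
  have hIN : (V ∪ W) ∩ N = W := by
    rw [union_inter_distrib_right, inter_eq_left.2 hWN,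
      disjoint_iff_inter_eq_empty.1 (hMN.mono_left hVM), empty_union]
  have hIt : #((V ∪ W) ∩ M) = t := hIM.symm ▸ hVt
  refine ⟨V ∪ W, mem_coe.2 (mem_interFam_At htn ?_ ?_ hIt), Prod.ext hIM hIN⟩
  · exact union_subset (hVM.trans (Icc_subset_Icc_right htn)) (hWN.trans sdiff_subset)
  · rw [card_union_of_disjoint (hMN.mono hVM hWN)]
    omega

lemma mul_chooseSum_le_four_mul_card_interFam_At (htk : t + 1 ≤ k) (hn : 7 * k ^ 2 ≤ n) :
    (t + 2) * (t + 1) * chooseSum n (k - t - 1) ≤ 4 * #(interFam (At n k t)) := by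
  have htn : t + 2 ≤ n := by nlinarith
  have hsum : chooseSum n (k - t - 1) ≤ 2 * (n - (t + 2)).choose (k - t - 1) := by
    refine chooseSum_le_two_mul_choose_sub ?_
    calc (2 * (t + 2) + 3) * (k - t - 1) ≤ 7 * k * k := by gcongr <;> omega
      _ ≤ n + 1 := by linarith
  have hchoose : (t + 2) * (t + 1) = 2 * (t + 2).choose t := by
    rw [Nat.choose_symm_add, Nat.choose_two_right,
      Nat.mul_div_cancel' (Nat.even_mul_pred_self (t + 2)).two_dvd]
    rfl
  calc (t + 2) * (t + 1) * chooseSum n (k - t - 1)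
      ≤ 2 * (t + 2).choose t * (2 * (n - (t + 2)).choose (k - t - 1)) := by rw [hchoose]; gcongr
    _ = 4 * ((t + 2).choose t * (n - (t + 2)).choose (k - t - 1)) := by ring
    _ ≤ 4 * #(interFam (At n k t)) := by
        gcongr
        exact choose_mul_choose_le_card_interFam_At htk htn

end SmallSupport

section Saturated

variable {n k t : ℕ} {F : Finset (Finset ℕ)}

lemma exists_saturated_superset (hF : F ⊆ (Icc 1 n).powersetCard k) (hFt : tIntersecting t F) :
    ∃ G, F ⊆ G ∧ G ⊆ (Icc 1 n).powersetCard k ∧ tIntersecting t G ∧ saturated n k t G := by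
  classical
  let S := {G ∈ ((Icc 1 n).powersetCard k).powerset | tIntersecting t G}
  have mem_S {G} : G ∈ S ↔ G ⊆ (Icc 1 n).powersetCard k ∧ tIntersecting t G := by
    rw [mem_filter, mem_powerset]
  obtain ⟨G, hFG, hG⟩ := S.exists_le_maximal (mem_S.2 ⟨hF, hFt⟩)
  obtain ⟨hGn, hGt⟩ := mem_S.1 hG.prop
  exact ⟨G, hFG, hGn, hGt, fun A hA hAG hins =>
    hAG (hG.le_of_ge (mem_S.2 ⟨insert_subset hA hGn, hins⟩) (subset_insert A G)
      (mem_insert_self A G))⟩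

lemma mem_of_saturated {A : Finset ℕ} (htk : t ≤ k) (hFt : tIntersecting t F)
    (hs : saturated n k t F) (hA : A ∈ (Icc 1 n).powersetCard k) (hAF : IsTransversal t F A) :
    A ∈ F := by
  by_contra hnot
  refine hs A hA hnot fun B hB C hC => ?_
  rcases mem_insert.1 hB with rfl | hBF <;> rcases mem_insert.1 hC with rfl | hCF
  · rwa [inter_self, (mem_powersetCard.1 hA).2]
  · exact hAF C hCF
  · rw [inter_comm]
    exact hAF B hBF
  · exact hFt B hBF C hCF

lemma mem_transv {T : Finset ℕ} :
    T ∈ transv n k t F ↔ T ⊆ Icc 1 n ∧ #T ≤ k ∧ IsTransversal t F T := by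
  rw [transv, mem_filter, mem_powerset, IsTransversal]

lemma mem_transv_of_mem {A : Finset ℕ} (hF : F ⊆ (Icc 1 n).powersetCard k)
    (hFt : tIntersecting t F) (hA : A ∈ F) : A ∈ transv n k t F :=
  have hAn := mem_powersetCard.1 (hF hA)
  mem_transv.2 ⟨hAn.1, hAn.2.le, hFt A hA⟩

lemma isTransversal_transv (hn : 2 * k ≤ n) (htk : t ≤ k) (hFt : tIntersecting t F)
    (hs : saturated n k t F) {T : Finset ℕ} (hT : T ∈ transv n k t F) :
    IsTransversal t (transv n k t F) T := by
  intro T' hT'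
  obtain ⟨hTn, hTk, hTF⟩ := mem_transv.1 hT
  obtain ⟨-, hTk', hTF'⟩ := mem_transv.1 hT'
  have hroom : k - #T ≤ #(Icc 1 n \ (T ∪ T')) := by
    have hsdiff := le_card_sdiff (T ∪ T') (Icc 1 n)
    have hunion := card_union_le T T'
    rw [Nat.card_Icc] at hsdiff
    omega
  obtain ⟨Z, hZ, hZk⟩ := exists_subset_card_eq hroom
  obtain ⟨hZn, hZTT'⟩ := subset_sdiff.1 hZ
  obtain ⟨hZT, hZT'⟩ := disjoint_union_right.1 hZTT'
  have hmem : T ∪ Z ∈ F := by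
    refine mem_of_saturated htk hFt hs (mem_powersetCard.2 ⟨union_subset hTn hZn, ?_⟩)
      (hTF.mono subset_union_left)
    rw [card_union_of_disjoint hZT.symm, hZk, Nat.add_sub_cancel' hTk]
  calc t ≤ #(T' ∩ (T ∪ Z)) := hTF' _ hmem
    _ = #(T ∩ T') := by
        rw [inter_union_distrib_left, disjoint_iff_inter_eq_empty.1 hZT'.symm, union_empty,
          inter_comm]

lemma minimal_of_mem_minFam_transv {X : Finset ℕ} (hX : X ∈ minFam (transv n k t F)) :
    Minimal (IsTransversal t F) X := by
  obtain ⟨hXT, hmin⟩ := mem_filter.1 hX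
  obtain ⟨hXn, hXk, hXF⟩ := mem_transv.1 hXT
  exact ⟨hXF, fun Y hY hYX =>
    (hmin Y (mem_transv.2 ⟨hYX.trans hXn, (card_le_card hYX).trans hXk, hY⟩) hYX).ge⟩

lemma exists_mem_minFam_subset {S : Finset (Finset ℕ)} {A : Finset ℕ} (hA : A ∈ S) :
    ∃ X ∈ minFam S, X ⊆ A := by
  obtain ⟨X, hXA, hX⟩ := S.exists_le_minimal hA
  exact ⟨X, mem_filter.2 ⟨hX.prop, fun Y hY hYX => hYX.antisymm (hX.le_of_le hY hYX)⟩, hXA⟩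

/-- The bases of `F` of level `r`: its minimal `t`-transversals of size `t + r`. -/
def bases (n k t : ℕ) (F : Finset (Finset ℕ)) (r : ℕ) : Finset (Finset ℕ) :=
  {X ∈ minFam (transv n k t F) | #X = t + r}

lemma card_bases_le {r : ℕ} (hn : 2 * k ≤ n) (hr : t + r ≤ k)
    (hF : F ⊆ (Icc 1 n).powersetCard k) (hFt : tIntersecting t F) (hs : saturated n k t F) :
    #(bases n k t F r) ≤ (8 * k) ^ r := by
  have hmem : ∀ X ∈ bases n k t F r, X ∈ minFam (transv n k t F) := fun X hX =>
    (mem_filter.1 hX).1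
  have htransv : ∀ X ∈ bases n k t F r, X ∈ transv n k t F := fun X hX =>
    (mem_filter.1 (hmem X hX)).1
  exact card_le_of_forall_minimal_isTransversal hr (fun A hA => (mem_powersetCard.1 (hF hA)).2.le)
    (fun X hX => minimal_of_mem_minFam_transv (hmem X hX)) (fun X hX => (mem_filter.1 hX).2)
    fun X hX Y hY => isTransversal_transv hn (by omega) hFt hs (htransv X hX) Y (htransv Y hY)

lemma inter_mem_nearFam_of_mem_bases {r : ℕ} {A B X : Finset ℕ}
    (hF : F ⊆ (Icc 1 n).powersetCard k) (hA : A ∈ F) (hB : B ∈ F)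
    (hX : X ∈ bases n k t F r) (hXA : X ⊆ A) :
    A ∩ B ∈ nearFam (Icc 1 n) X r (k - t - r) := by
  obtain ⟨hXmin, hXr⟩ := mem_filter.1 hX
  obtain ⟨hAn, hAk⟩ := mem_powersetCard.1 (hF hA)
  refine mem_nearFam.2 ⟨inter_subset_left.trans hAn, ?_, ?_⟩
  · have hXB := (minimal_of_mem_minFam_transv hXmin).prop B hB
    have hsplit := card_sdiff_add_card_inter X (A ∩ B)
    rw [← inter_assoc, inter_eq_left.2 hXA] at hsplit
    omega
  · calc #((A ∩ B) \ X) ≤ #(A \ X) := card_le_card (sdiff_subset_sdiff inter_subset_left le_rfl)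
      _ = k - t - r := by rw [card_sdiff_of_subset hXA, hAk, hXr, Nat.sub_sub]

theorem interFam_subset_union_nearFam {T : Finset ℕ} (hF : F ⊆ (Icc 1 n).powersetCard k)
    (hFt : tIntersecting t F) (hTt : #T = t) (hT : ∀ X ∈ transv n k t F, #X ≤ t + 1 → T ⊆ X) :
    interFam F ⊆ nearFam (Icc 1 n) T 0 (k - t - 1) ∪ (Icc 2 (k - t)).biUnion fun r =>
      (bases n k t F r).biUnion fun X => nearFam (Icc 1 n) X r (k - t - r) := by
  have hdich : ∀ A ∈ F, T ⊆ A ∨ ∃ r ∈ Icc 2 (k - t), ∃ X ∈ bases n k t F r, X ⊆ A := by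
    intro A hA
    obtain ⟨X, hX, hXA⟩ := exists_mem_minFam_subset (mem_transv_of_mem hF hFt hA)
    have hXtransv := (mem_filter.1 hX).1
    by_cases hXt : #X ≤ t + 1
    · exact Or.inl ((hT X hXtransv hXt).trans hXA)
    · have hXk := (mem_transv.1 hXtransv).2.1
      exact Or.inr ⟨#X - t, mem_Icc.2 (by omega), X, mem_filter.2 ⟨hX, by omega⟩, hXA⟩
  intro I hI
  have hIk := card_lt_of_mem_interFam (fun A hA => (mem_powersetCard.1 (hF hA)).2) hI
  obtain ⟨A, hA, B, hB, -, rfl⟩ := mem_interFam.1 hI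
  simp only [mem_union, mem_biUnion]
  rcases hdich A hA with hTA | ⟨r, hr, X, hX, hXA⟩
  · rcases hdich B hB with hTB | ⟨r, hr, X, hX, hXB⟩
    · have hTI : T ⊆ A ∩ B := subset_inter hTA hTB
      refine Or.inl (mem_nearFam.2 ⟨?_, ?_, ?_⟩)
      · exact inter_subset_left.trans (mem_powersetCard.1 (hF hA)).1
      · rw [sdiff_eq_empty_iff_subset.2 hTI, card_empty]
      · rw [card_sdiff_of_subset hTI]
        omega
    · exact Or.inr ⟨r, hr, X, hX,
        inter_comm A B ▸ inter_mem_nearFam_of_mem_bases hF hB hA hX hXB⟩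
  · exact Or.inr ⟨r, hr, X, hX, inter_mem_nearFam_of_mem_bases hF hA hB hX hXA⟩

theorem card_interFam_le_chooseSum_add_sum {T : Finset ℕ} (hn : 2 * k ≤ n)
    (hF : F ⊆ (Icc 1 n).powersetCard k) (hFt : tIntersecting t F) (hs : saturated n k t F)
    (hTt : #T = t) (hT : ∀ X ∈ transv n k t F, #X ≤ t + 1 → T ⊆ X) :
    #(interFam F) ≤ chooseSum n (k - t - 1) + ∑ r ∈ Icc 2 (k - t),
      (8 * k) ^ r * (chooseSum (t + r) r * chooseSum n (k - t - r)) := by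
  have hstar : #(nearFam (Icc 1 n) T 0 (k - t - 1)) ≤ chooseSum n (k - t - 1) := by
    simpa [chooseSum_zero] using card_nearFam_le (Icc 1 n) T 0 (k - t - 1)
  have hbase : ∀ r, ∀ X ∈ bases n k t F r, #(nearFam (Icc 1 n) X r (k - t - r)) ≤
      chooseSum (t + r) r * chooseSum n (k - t - r) := by
    intro r X hX
    simpa [(mem_filter.1 hX).2] using card_nearFam_le (Icc 1 n) X r (k - t - r)
  refine (card_le_card (interFam_subset_union_nearFam hF hFt hTt hT)).trans
    ((card_union_le _ _).trans (add_le_add hstar (card_biUnion_le.trans (sum_le_sum ?_))))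
  intro r hr
  rw [mem_Icc] at hr
  refine (card_biUnion_le_card_mul _ _ _ (hbase r)).trans ?_
  gcongr
  exact card_bases_le hn (by omega) hF hFt hs

end Saturated

section Estimate

variable {n k t : ℕ}

lemma chooseSum_add_le {d : ℕ} (ht : 1 ≤ t) (hk : t + (d + 2) ≤ k) :
    chooseSum (t + (d + 2)) (d + 2) ≤ 4 ^ (d + 2) * t ^ 2 * (2 * k) ^ d := by
  have hlin : t + (d + 2) + 1 ≤ 2 ^ (d + 2) * t := by
    have hpow : d + 4 ≤ 2 ^ (d + 2) := by
      have := Nat.lt_two_pow_self (n := d)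
      rw [pow_add]
      omega
    calc t + (d + 2) + 1 ≤ (d + 4) * t := by nlinarith
      _ ≤ 2 ^ (d + 2) * t := by gcongr
  calc chooseSum (t + (d + 2)) (d + 2)
      ≤ (t + (d + 2) + 1) ^ (d + 2) := chooseSum_le_succ_pow _ _
    _ = (t + (d + 2) + 1) ^ 2 * (t + (d + 2) + 1) ^ d := by rw [add_comm d 2, pow_add _ 2 d]
    _ ≤ (2 ^ (d + 2) * t) ^ 2 * (2 * k) ^ d := by gcongr; omega
    _ = 4 ^ (d + 2) * t ^ 2 * (2 * k) ^ d := by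
        rw [mul_pow, ← pow_mul, mul_comm (d + 2) 2, pow_mul]
        norm_num

lemma four_mul_two_pow_mul_le {r : ℕ} (ht : 1 ≤ t) (hr : 2 ≤ r) (hk : t + r ≤ k)
    (hn : (2 ^ 14 + 1) * k ^ 3 ≤ n) :
    2 ^ r * (4 * ((8 * k) ^ r * (chooseSum (t + r) r * chooseSum n (k - t - r)))) ≤
      t ^ 2 * chooseSum n (k - t - 1) := by
  obtain ⟨d, rfl⟩ := Nat.exists_eq_add_of_le' hr
  have hstep : (2 ^ 14 * k ^ 2) ^ (d + 1) * chooseSum n (k - t - (d + 2)) ≤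
      chooseSum n (k - t - 1) := by
    have hsub : k - t - 1 = k - t - (d + 2) + (d + 1) := by omega
    rw [hsub]
    refine pow_mul_chooseSum_le_chooseSum_add ?_
    calc (2 ^ 14 * k ^ 2 + 1) * (k - t - (d + 2) + (d + 1)) ≤ (2 ^ 14 * k ^ 2 + 1) * k := by
          gcongr
          omega
      _ = 2 ^ 14 * k ^ 3 + k := by ring
      _ ≤ 2 ^ 14 * k ^ 3 + k ^ 3 := by gcongr; exact Nat.le_self_pow three_ne_zero k
      _ ≤ n + 1 := by linarith
  have hconst : 2 ^ (d + 2) * (4 * (8 ^ (d + 2) * 4 ^ (d + 2) * 2 ^ d)) ≤ (2 ^ 14) ^ (d + 1) := by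
    calc 2 ^ (d + 2) * (4 * (8 ^ (d + 2) * 4 ^ (d + 2) * 2 ^ d))
        = 2 ^ 14 * (2 * 8 * 4 * 2) ^ d := by simp only [mul_pow]; ring
      _ ≤ 2 ^ 14 * (2 ^ 14) ^ d := by gcongr; norm_num
      _ = (2 ^ 14) ^ (d + 1) := (pow_succ' _ _).symm
  set s := chooseSum n (k - t - (d + 2))
  calc 2 ^ (d + 2) * (4 * ((8 * k) ^ (d + 2) * (chooseSum (t + (d + 2)) (d + 2) * s)))
      ≤ 2 ^ (d + 2) * (4 * ((8 * k) ^ (d + 2) * (4 ^ (d + 2) * t ^ 2 * (2 * k) ^ d * s))) := by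
        gcongr
        exact chooseSum_add_le ht hk
    _ = t ^ 2 *
          (2 ^ (d + 2) * (4 * (8 ^ (d + 2) * 4 ^ (d + 2) * 2 ^ d)) * (k ^ 2) ^ (d + 1) * s) := by
        simp only [mul_pow]
        ring
    _ ≤ t ^ 2 * ((2 ^ 14) ^ (d + 1) * (k ^ 2) ^ (d + 1) * s) := by gcongr
    _ = t ^ 2 * ((2 ^ 14 * k ^ 2) ^ (d + 1) * s) := by rw [mul_pow]
    _ ≤ t ^ 2 * chooseSum n (k - t - 1) := by gcongr

lemma sum_le_of_two_pow_mul_le {s : Finset ℕ} {a : ℕ → ℕ} {M : ℕ} (hs : ∀ r ∈ s, 1 ≤ r)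
    (h : ∀ r ∈ s, 2 ^ r * a r ≤ M) : ∑ r ∈ s, a r ≤ M := by
  have hsub : s ⊆ Ico 1 (s.sup id + 1) := fun r hr =>
    mem_Ico.2 ⟨hs r hr, Nat.lt_succ_of_le (le_sup (f := id) hr)⟩
  calc ∑ r ∈ s, a r ≤ ∑ r ∈ s, M / 2 ^ r := sum_le_sum fun r hr =>
        (Nat.le_div_iff_mul_le (by positivity)).2 (mul_comm (a r) _ ▸ h r hr)
    _ ≤ ∑ r ∈ Ico 1 (s.sup id + 1), M / 2 ^ r := sum_le_sum_of_subset hsub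
    _ ≤ M / (2 - 1) := Nat.geom_sum_Ico_le le_rfl M _
    _ = M := Nat.div_one M

theorem four_mul_card_interFam_le {F : Finset (Finset ℕ)} {T : Finset ℕ} (ht : 1 ≤ t)
    (hn : (2 ^ 14 + 1) * k ^ 3 ≤ n) (hF : F ⊆ (Icc 1 n).powersetCard k)
    (hFt : tIntersecting t F) (hs : saturated n k t F) (hTt : #T = t)
    (hT : ∀ X ∈ transv n k t F, #X ≤ t + 1 → T ⊆ X) :
    4 * #(interFam F) ≤ (t ^ 2 + 4) * chooseSum n (k - t - 1) := by
  have hk : k ≤ k ^ 3 := Nat.le_self_pow three_ne_zero k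
  have hcount := card_interFam_le_chooseSum_add_sum (by omega) hF hFt hs hTt hT
  have hsum : ∑ r ∈ Icc 2 (k - t),
      4 * ((8 * k) ^ r * (chooseSum (t + r) r * chooseSum n (k - t - r))) ≤
        t ^ 2 * chooseSum n (k - t - 1) := by
    refine sum_le_of_two_pow_mul_le (fun r hr => ?_) fun r hr => ?_
    · exact one_le_two.trans (mem_Icc.1 hr).1
    · rw [mem_Icc] at hr
      exact four_mul_two_pow_mul_le ht hr.1 (by omega) hn
  rw [← mul_sum] at hsum
  linarith

end Estimate

theorem card_interFam_le_of_saturated {n k t : ℕ} {F : Finset (Finset ℕ)} (ht : 1 ≤ t)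
    (htk : t + 1 ≤ k) (hn : (2 ^ 14 + 1) * k ^ 3 ≤ n) (hF : F ⊆ (Icc 1 n).powersetCard k)
    (hFt : tIntersecting t F) (hs : saturated n k t F) :
    #(interFam F) ≤ #(interFam (At n k t)) := by
  have hk : k ≤ k ^ 3 := Nat.le_self_pow three_ne_zero k
  have hk2 : k ^ 2 ≤ k ^ 3 := Nat.pow_le_pow_right (by omega) (by norm_num)
  let U := {X ∈ transv n k t F | #X ≤ t + 1}
  have hU : ∀ X ∈ U, X ∈ transv n k t F := fun X hX => (mem_filter.1 hX).1
  have hUU : ∀ X ∈ U, IsTransversal t U X := fun X hX Y hY =>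
    isTransversal_transv (by omega) (by omega) hFt hs (hU X hX) Y (hU Y hY)
  rcases exists_common_subset_or_exists_card_union_eq (fun X hX => (mem_filter.1 hX).2) hUU with
    ⟨T, hTt, hT⟩ | ⟨X₁, hX₁, X₂, hX₂, hcard, hmeet⟩
  · have hstar := four_mul_card_interFam_le ht hn hF hFt hs hTt fun X hX hXt =>
      hT X (mem_filter.2 ⟨hX, hXt⟩)
    have hAt := mul_chooseSum_le_four_mul_card_interFam_At htk (n := n) (by linarith)
    have hcoeff : t ^ 2 + 4 ≤ (t + 2) * (t + 1) := by nlinarith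
    have := Nat.mul_le_mul_right (chooseSum n (k - t - 1)) hcoeff
    linarith
  · have hXn : ∀ X ∈ U, X ⊆ Icc 1 n := fun X hX => (mem_transv.1 (hU X hX)).1
    refine card_interFam_le_card_interFam_At hF (union_subset (hXn X₁ hX₁) (hXn X₂ hX₂)) hcard
      fun A hA => hmeet _ fun X hX => ?_
    rw [inter_comm]
    exact (mem_transv.1 (hU X hX)).2.2 A hA

theorem stmt2_general {n k t : ℕ} {F : Finset (Finset ℕ)} (ht : 1 ≤ t)
    (hn : (2 ^ 14 + 1) * k ^ 3 ≤ n) (hF : F ⊆ (Icc 1 n).powersetCard k)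
    (hFt : tIntersecting t F) : #(interFam F) ≤ #(interFam (At n k t)) := by
  rcases le_or_gt k t with hkt | htk
  · simp [interFam_eq_empty_of_le hkt (fun _ hA => (mem_powersetCard.1 (hF hA)).2) hFt]
  obtain ⟨G, hFG, hG, hGt, hGs⟩ := exists_saturated_superset hF hFt
  exact (card_le_card (interFam_mono hFG)).trans
    (card_interFam_le_of_saturated ht htk hn hG hGt hGs)

theorem stmt2 :
    ∃ C : ℝ, 0 < C ∧
      ∀ k t : ℕ, 1 ≤ t → (t : ℝ) < 3 / 4 * (k : ℝ) - 4 →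
        ∀ n : ℕ, C * (k : ℝ) ^ 3 ≤ (n : ℝ) →
          ∀ F ⊆ (Finset.Icc 1 n).powersetCard k, tIntersecting t F →
            (interFam F).card ≤ (interFam (At n k t)).card :=
  ⟨2 ^ 14 + 1, by norm_num, fun _ _ ht _ _ hn _ hF hFt =>
    stmt2_general ht (by exact_mod_cast hn) hF hFt⟩
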